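/- arXiv:1508.05892 — 2 statements merged into one kernel-verified Lean document; each statement's English description precedes it below -/
import Mathlib

section
/- Let C₁ and C₂ be disjoint maximal commuting classes in U^{(p²)}, and let U ∈ C₁ and V ∈ C₂ be commuting elements. Then for any k ≠ l in Z/p, no maximal commuting class that is disjoint from C₁ contains both U^{∘k}∘V and U^{∘l}∘V; that is, the operators U^{∘k}∘V and U^{∘l}∘V must belong to different such classes. -/
/-!
Up to powers of `ω`, the two-particle Pauli operators form the vector space `(ℤ/p)⁴`: write `P v`
for the operator with exponent vector `v = (a, b)`, where `a` collects the shifts and `b` the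
phases. Then `P v * P w = ω ^ (b · c) • P (v + w)` for `w = (c, d)` (`pauliOp_mul`), `P v` determines
`v` even up to a nonzero scalar (`pauliOp_smul_inj`), and `P v`, `P w` commute exactly when the
symplectic form `b · c - d · a` vanishes (`commute_pauliOp_iff`). So `∘` is vector addition and
`U^{∘k}` is scalar multiplication.

The exponent vectors of a commuting class span an isotropic subspace, which has dimension at most
`2` because the form is nondegenerate on a space of dimension `4`. A maximal commuting class has
`p² - 1` nonzero exponent vectors, so together with `0` they fill up that subspace
(`MaxCommClass.exists_submodule`): the class is the nonzero part of a Lagrangian plane.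

If `C` contained both `k u + v` and `l u + v`, it would contain the nonzero difference `(k - l) u`.
This vector is a multiple of `u`, so it lies in `C₁` too, against disjointness.
-/

open Matrix
open scoped Kronecker

noncomputable section

/-- ω = exp(2πi/p), a primitive p-th root of unity. -/
def omega_p (p : ℕ) : ℂ := Complex.exp (2 * Real.pi * Complex.I / p)

/-- Generalized Pauli X on ℂ^p : X e_j = e_{j+1}. -/
def genX (p : ℕ) : Matrix (ZMod p) (ZMod p) ℂ :=
  Matrix.of fun i j => if i = j + 1 then 1 else 0

/-- Generalized Pauli Z on ℂ^p : Z e_j = ω^j e_j. -/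
def genZ (p : ℕ) : Matrix (ZMod p) (ZMod p) ℂ :=
  Matrix.of fun i j => if i = j then omega_p p ^ j.val else 0

/-- The space of p² × p² complex matrices. -/
abbrev PauliMat (p : ℕ) := Matrix (ZMod p × ZMod p) (ZMod p × ZMod p) ℂ

/-- The set U^{(p²)} of p⁴ two-particle generalized Pauli operators
    (X^m Z^n) ⊗ (X^k Z^l), with m,n,k,l ∈ {0,…,p−1}. -/
def PauliSet (p : ℕ) [NeZero p] : Set (PauliMat p) :=
  { U | ∃ m n k l : ZMod p,
      U = (genX p ^ m.val * genZ p ^ n.val) ⊗ₖ (genX p ^ k.val * genZ p ^ l.val) }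

/-- A maximal commuting class: a subset of U^{(p²)} \ {I} of cardinality p² − 1
    whose elements pairwise commute. -/
def MaxCommClass (p : ℕ) [NeZero p] (C : Set (PauliMat p)) : Prop :=
  C ⊆ PauliSet p \ {1} ∧ C.ncard = p ^ 2 - 1 ∧ ∀ U ∈ C, ∀ V ∈ C, Commute U V

/-- U ∘ V: the unique element of U^{(p²)} such that U·V is a power of ω times it. -/
def circ (p : ℕ) [NeZero p] (U V : PauliMat p) : PauliMat p :=
  @Classical.epsilon _ ⟨(0 : PauliMat p)⟩
    fun W => W ∈ PauliSet p ∧ ∃ j : ℕ, U * V = omega_p p ^ j • W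

/-- U^{∘k}: the unique element of U^{(p²)} such that the matrix power U^k is
    a power of ω times it. -/
def cpow (p : ℕ) [NeZero p] (U : PauliMat p) (k : ZMod p) : PauliMat p :=
  @Classical.epsilon _ ⟨(0 : PauliMat p)⟩
    fun W => W ∈ PauliSet p ∧ ∃ j : ℕ, U ^ k.val = omega_p p ^ j • W

/-- Independence: U^k is not a scalar multiple of V^l for any (k,l) ≠ (0,0). -/
def Indep (p : ℕ) [NeZero p] (U V : PauliMat p) : Prop :=
  ∀ k l : ZMod p, (k, l) ≠ (0, 0) → ∀ c : ℂ, U ^ k.val ≠ c • V ^ l.val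

/-- The class ⟨U,V⟩ generated by a pair of independent commuting operators:
    {U^{∘k} ∘ V^{∘l} : (k,l) ≠ (0,0)}. -/
def genClass (p : ℕ) [NeZero p] (U V : PauliMat p) : Set (PauliMat p) :=
  { W | ∃ k l : ZMod p, (k, l) ≠ (0, 0) ∧ W = circ p (cpow p U k) (cpow p V l) }

/-- A complete set of p² + 1 pairwise disjoint maximal commuting classes. -/
def CompleteSet (p : ℕ) [NeZero p] (S : Set (Set (PauliMat p))) : Prop :=
  S.ncard = p ^ 2 + 1 ∧ (∀ C ∈ S, MaxCommClass p C) ∧ S.Pairwise Disjoint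

/-- A family of classes is unextendible if no maximal commuting class is contained
    in U^{(p²)} \ ({I} ∪ ⋃ F). -/
def Unextendible (p : ℕ) [NeZero p] (F : Set (Set (PauliMat p))) : Prop :=
  ¬ ∃ C : Set (PauliMat p), MaxCommClass p C ∧ C ⊆ PauliSet p \ ({1} ∪ ⋃₀ F)

/-! ### Pauli operators indexed by exponent vectors -/

/-- Exponent vectors `((m, k), (n, l))`, standing for the operator `(X^m Z^n) ⊗ (X^k Z^l)`. -/
abbrev ExpVec (p : ℕ) := (ZMod p × ZMod p) × (ZMod p × ZMod p)

lemma omega_p_primitive (p : ℕ) [NeZero p] : IsPrimitiveRoot (omega_p p) p :=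
  Complex.isPrimitiveRoot_exp p (NeZero.ne p)

/-- The additive character `a ↦ ω ^ a` of `ℤ/p`. -/
def chi (p : ℕ) [NeZero p] : AddChar (ZMod p) ℂ :=
  AddChar.zmodChar p (omega_p_primitive p).pow_eq_one

lemma chi_apply (p : ℕ) [NeZero p] (a : ZMod p) : chi p a = omega_p p ^ a.val := rfl

lemma chi_ne_zero (p : ℕ) [NeZero p] (a : ZMod p) : chi p a ≠ 0 :=
  pow_ne_zero _ ((omega_p_primitive p).ne_zero (NeZero.ne p))

lemma chi_injective (p : ℕ) [NeZero p] : Function.Injective (chi p) := fun a b h =>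
  ZMod.val_injective p ((omega_p_primitive p).pow_inj (ZMod.val_lt a) (ZMod.val_lt b) h)

/-- The dot product on `(ℤ/p)²`. -/
def dot {p : ℕ} (a b : ZMod p × ZMod p) : ZMod p := a.1 * b.1 + a.2 * b.2

/-- The Pauli operator with exponent vector `(a, b)`, given by its entries: it sends `e_j` to
`ω ^ (b · j) e_{j + a}`. -/
def pauliOp (p : ℕ) [NeZero p] (v : ExpVec p) : PauliMat p :=
  Matrix.of fun i j => if i = j + v.1 then chi p (dot v.2 j) else 0

lemma genX_pow (p : ℕ) [NeZero p] (m : ℕ) :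
    genX p ^ m = Matrix.of fun i j => if i = j + (m : ZMod p) then 1 else 0 := by
  induction m with
  | zero => ext i j; simp [Matrix.one_apply]
  | succ m ih =>
    rw [pow_succ, ih]
    ext i j
    simp [Matrix.mul_apply, genX, add_left_comm, add_comm]

lemma genZ_pow (p : ℕ) [NeZero p] (n : ℕ) :
    genZ p ^ n = Matrix.diagonal fun j => chi p ((n : ZMod p) * j) := by
  have h : genZ p = Matrix.diagonal fun j => chi p j := by
    ext i j
    by_cases hij : i = j <;> simp [genZ, hij, chi_apply]
  rw [h, Matrix.diagonal_pow]
  congr 1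
  funext j
  rw [Pi.pow_apply, ← AddChar.map_nsmul_eq_pow, nsmul_eq_mul]

lemma kronecker_eq_pauliOp (p : ℕ) [NeZero p] (m n k l : ZMod p) :
    (genX p ^ m.val * genZ p ^ n.val) ⊗ₖ (genX p ^ k.val * genZ p ^ l.val) =
      pauliOp p ((m, k), (n, l)) := by
  ext ⟨i₁, i₂⟩ ⟨j₁, j₂⟩
  simp only [genX_pow, genZ_pow, Matrix.kroneckerMap_apply, Matrix.mul_diagonal, Matrix.of_apply,
    pauliOp, dot, ZMod.natCast_zmod_val, AddChar.map_add_eq_mul, Prod.mk_add_mk, Prod.mk.injEq]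
  by_cases h₁ : i₁ = j₁ + m <;> by_cases h₂ : i₂ = j₂ + k <;> simp [h₁, h₂]

lemma mem_pauliSet_iff (p : ℕ) [NeZero p] (W : PauliMat p) :
    W ∈ PauliSet p ↔ ∃ v, W = pauliOp p v := by
  constructor
  · rintro ⟨m, n, k, l, rfl⟩
    exact ⟨_, kronecker_eq_pauliOp p m n k l⟩
  · rintro ⟨⟨⟨m, k⟩, ⟨n, l⟩⟩, rfl⟩
    exact ⟨m, n, k, l, (kronecker_eq_pauliOp p m n k l).symm⟩

lemma pauliOp_mem (p : ℕ) [NeZero p] (v : ExpVec p) : pauliOp p v ∈ PauliSet p :=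
  (mem_pauliSet_iff p _).2 ⟨v, rfl⟩

lemma pauliOp_zero (p : ℕ) [NeZero p] : pauliOp p 0 = 1 := by
  ext i j
  simp [pauliOp, Matrix.one_apply, dot]

lemma pauliOp_mul (p : ℕ) [NeZero p] (v w : ExpVec p) :
    pauliOp p v * pauliOp p w = chi p (dot v.2 w.1) • pauliOp p (v + w) := by
  ext i j
  simp only [Matrix.mul_apply, pauliOp, Matrix.of_apply, Matrix.smul_apply, mul_ite, mul_zero,
    Finset.sum_ite_eq', Finset.mem_univ, if_true, smul_eq_mul, Prod.fst_add, Prod.snd_add]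
  have h : j + w.1 + v.1 = j + (v.1 + w.1) := by abel
  simp only [h, if_true]
  by_cases hi : i = j + (v.1 + w.1)
  · simp only [hi, if_true, ← AddChar.map_add_eq_mul]
    congr 1
    simp only [dot, Prod.fst_add, Prod.snd_add]
    ring
  · simp [hi]

/-- A Pauli operator determines its exponent vector, even up to a nonzero scalar. -/
lemma pauliOp_smul_inj (p : ℕ) [NeZero p] {c d : ℂ} (hc : c ≠ 0) {v w : ExpVec p}
    (h : c • pauliOp p v = d • pauliOp p w) : v = w ∧ c = d := by
  have key : ∀ i j, c * (if i = j + v.1 then chi p (dot v.2 j) else 0) =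
      d * (if i = j + w.1 then chi p (dot w.2 j) else 0) := fun i j => congrFun (congrFun h i) j
  -- A nonzero entry of column `0` gives the shift and the scalar; the columns `(1, 0)` and
  -- `(0, 1)` then give the two phase exponents.
  have h₁ : v.1 = w.1 := by
    by_contra hne
    have := key v.1 0
    simp [hne, hc, chi_ne_zero] at this
  have hcd : c = d := by simpa [h₁, dot] using key w.1 0
  subst hcd
  have hx := key ((1, 0) + w.1) (1, 0)
  have hy := key ((0, 1) + w.1) (0, 1)
  simp only [h₁, if_true, dot, mul_one, mul_zero, add_zero, zero_add] at hx hy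
  exact ⟨Prod.ext h₁ (Prod.ext (chi_injective p (mul_left_cancel₀ hc hx))
    (chi_injective p (mul_left_cancel₀ hc hy))), rfl⟩

lemma pauliOp_injective (p : ℕ) [NeZero p] : Function.Injective (pauliOp p) := fun v w h =>
  (pauliOp_smul_inj p (c := 1) (d := 1) one_ne_zero (by simpa using h)).1

lemma commute_pauliOp_iff (p : ℕ) [NeZero p] (v w : ExpVec p) :
    Commute (pauliOp p v) (pauliOp p w) ↔ dot v.2 w.1 = dot w.2 v.1 := by
  rw [commute_iff_eq, pauliOp_mul, pauliOp_mul, add_comm w v]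
  refine ⟨fun h => chi_injective p (pauliOp_smul_inj p (chi_ne_zero p _) h).2, fun h => by rw [h]⟩

lemma pauliOp_pow (p : ℕ) [NeZero p] (v : ExpVec p) (n : ℕ) :
    ∃ a : ZMod p, pauliOp p v ^ n = chi p a • pauliOp p (n • v) := by
  induction n with
  | zero => exact ⟨0, by simp [pauliOp_zero]⟩
  | succ n ih =>
    obtain ⟨a, ha⟩ := ih
    refine ⟨a + dot (n • v).2 v.1, ?_⟩
    rw [pow_succ, ha, Matrix.smul_mul, pauliOp_mul, smul_smul, ← AddChar.map_add_eq_mul, succ_nsmul]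

/-- The description of `M` as a power of `ω` times a Pauli operator is unique, so the
choice made in `circ` and `cpow` is forced. -/
lemma epsilon_eq_pauliOp (p : ℕ) [NeZero p] (M : PauliMat p) (a : ZMod p) (v : ExpVec p)
    (h : M = chi p a • pauliOp p v) :
    (@Classical.epsilon _ ⟨(0 : PauliMat p)⟩
      fun W => W ∈ PauliSet p ∧ ∃ j : ℕ, M = omega_p p ^ j • W) = pauliOp p v := by
  obtain ⟨hW, j, hj⟩ := Classical.epsilon_spec
    (p := fun W => W ∈ PauliSet p ∧ ∃ j : ℕ, M = omega_p p ^ j • W)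
    ⟨pauliOp p v, pauliOp_mem p v, a.val, h⟩
  obtain ⟨w, hw⟩ := (mem_pauliSet_iff p _).1 hW
  rw [hw] at hj
  rw [(pauliOp_smul_inj p (chi_ne_zero p a) (h.symm.trans hj)).1]
  exact hw

lemma circ_pauliOp (p : ℕ) [NeZero p] (v w : ExpVec p) :
    circ p (pauliOp p v) (pauliOp p w) = pauliOp p (v + w) :=
  epsilon_eq_pauliOp p _ _ _ (pauliOp_mul p v w)

lemma cpow_pauliOp (p : ℕ) [NeZero p] (v : ExpVec p) (k : ZMod p) :
    cpow p (pauliOp p v) k = pauliOp p (k • v) := by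
  obtain ⟨a, ha⟩ := pauliOp_pow p v k.val
  have hk : k.val • v = k • v := by
    rw [← Nat.cast_smul_eq_nsmul (ZMod p), ZMod.natCast_zmod_val]
  rw [hk] at ha
  exact epsilon_eq_pauliOp p _ _ _ ha

/-! ### Isotropic subspaces -/

/-- The symplectic form `((a, b), (c, d)) ↦ b · c - d · a` on exponent vectors. -/
def sympl (p : ℕ) : LinearMap.BilinForm (ZMod p) (ExpVec p) :=
  LinearMap.mk₂ (ZMod p) (fun v w => dot v.2 w.1 - dot w.2 v.1)
    (fun u v w => by simp only [dot, Prod.fst_add, Prod.snd_add]; ring)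
    (fun c u v => by simp only [dot, Prod.smul_fst, Prod.smul_snd, smul_eq_mul]; ring)
    (fun u v w => by simp only [dot, Prod.fst_add, Prod.snd_add]; ring)
    (fun c u v => by simp only [dot, Prod.smul_fst, Prod.smul_snd, smul_eq_mul]; ring)

lemma sympl_apply (p : ℕ) (v w : ExpVec p) : sympl p v w = dot v.2 w.1 - dot w.2 v.1 := rfl

lemma sympl_isRefl (p : ℕ) : (sympl p).IsRefl := fun v w h => by
  rw [sympl_apply] at h ⊢
  rw [← neg_sub, h, neg_zero]

lemma sympl_nondegenerate (p : ℕ) : (sympl p).Nondegenerate := by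
  rw [LinearMap.BilinForm.Nondegenerate,
    LinearMap.IsRefl.nondegenerate_iff_separatingLeft (sympl_isRefl p)]
  rintro ⟨⟨a, b⟩, ⟨c, d⟩⟩ h
  have h₁ := h ((1, 0), (0, 0))
  have h₂ := h ((0, 1), (0, 0))
  have h₃ := h ((0, 0), (1, 0))
  have h₄ := h ((0, 0), (0, 1))
  simp [sympl_apply, dot] at h₁ h₂ h₃ h₄
  simp [h₁, h₂, h₃, h₄]

lemma isotropic_card_le (p : ℕ) [Fact p.Prime] (S : Submodule (ZMod p) (ExpVec p))
    (hS : ∀ v ∈ S, ∀ w ∈ S, sympl p v w = 0) : Nat.card S ≤ p ^ 2 := by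
  have h₁ : S ≤ (sympl p).orthogonal S := fun w hw v hv => hS v hv w hw
  have h₂ := LinearMap.BilinForm.finrank_orthogonal (sympl_nondegenerate p) S
  have h₃ := Submodule.finrank_mono h₁
  have h₄ : Module.finrank (ZMod p) (ExpVec p) = 4 := by simp
  rw [Module.natCard_eq_pow_finrank (K := ZMod p), Nat.card_zmod]
  exact Nat.pow_le_pow_right (Fact.out : p.Prime).pos (by omega)

/-- The exponent vectors of a maximal commuting class are the nonzero vectors of a subspace. -/
lemma MaxCommClass.exists_submodule {p : ℕ} [NeZero p] [Fact p.Prime] {C : Set (PauliMat p)}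
    (hC : MaxCommClass p C) :
    ∃ S : Submodule (ZMod p) (ExpVec p), ∀ v, pauliOp p v ∈ C ↔ v ∈ S ∧ v ≠ 0 := by
  obtain ⟨hsub, hcard, hcomm⟩ := hC
  set T : Set (ExpVec p) := pauliOp p ⁻¹' C with hT
  have hT0 : (0 : ExpVec p) ∉ T := fun h => (hsub h).2 (by simp [pauliOp_zero])
  have himg : pauliOp p '' T = C := by
    refine Set.image_preimage_eq_of_subset fun W hW => ?_
    obtain ⟨v, rfl⟩ := (mem_pauliSet_iff p W).1 (hsub hW).1
    exact ⟨v, rfl⟩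
  have hTcard : (insert 0 T).ncard = p ^ 2 := by
    rw [Set.ncard_insert_of_notMem hT0 T.toFinite,
      ← Set.ncard_image_of_injective T (pauliOp_injective p), himg, hcard]
    exact Nat.sub_add_cancel (Nat.one_le_pow _ _ (NeZero.pos p))
  let S := Submodule.span (ZMod p) T
  have hiso : ∀ v ∈ S, ∀ w ∈ S, sympl p v w = 0 := by
    intro v hv w hw
    induction hv, hw using Submodule.span_induction₂ with
    | mem_mem x y hx hy =>
      rw [sympl_apply, sub_eq_zero]
      exact (commute_pauliOp_iff p x y).1 (hcomm _ hx _ hy)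
    | zero_left | zero_right => simp
    | add_left _ _ _ _ _ _ h h' => simp [h, h']
    | add_right _ _ _ _ _ _ h h' => simp [h, h']
    | smul_left _ _ _ _ _ h => simp [h]
    | smul_right _ _ _ _ _ h => simp [h]
  have hle : insert 0 T ⊆ (S : Set (ExpVec p)) :=
    Set.insert_subset S.zero_mem Submodule.subset_span
  have heq : insert 0 T = (S : Set (ExpVec p)) :=
    Set.eq_of_subset_of_ncard_le hle (by rw [hTcard]; exact isotropic_card_le p S hiso)
  refine ⟨S, fun v => ?_⟩
  rw [← SetLike.mem_coe, ← heq]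
  constructor
  · intro hv
    exact ⟨Or.inr hv, fun h0 => hT0 (h0 ▸ hv)⟩
  · rintro ⟨rfl | hv, h0⟩
    · exact absurd rfl h0
    · exact hv

/-! ### Disjointness -/

/-- If C₁, C₂ are disjoint maximal commuting classes and U ∈ C₁, V ∈ C₂
commute, then for k ≠ l in Z/p the operators U^{∘k}∘V and U^{∘l}∘V cannot both lie in
a single maximal commuting class disjoint from C₁. -/
theorem stmt3 (p : ℕ) [NeZero p] (hp : p.Prime) (C₁ C₂ : Set (PauliMat p))
    (h₁ : MaxCommClass p C₁) (h₂ : MaxCommClass p C₂) (hd : Disjoint C₁ C₂)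
    (U V : PauliMat p) (hU : U ∈ C₁) (hV : V ∈ C₂) (hUV : Commute U V)
    (k l : ZMod p) (hkl : k ≠ l)
    (C : Set (PauliMat p)) (hC : MaxCommClass p C) (hCd : Disjoint C C₁) :
    ¬ (circ p (cpow p U k) V ∈ C ∧ circ p (cpow p U l) V ∈ C) := by
  have : Fact p.Prime := ⟨hp⟩
  rintro ⟨hk, hl⟩
  obtain ⟨u, rfl⟩ := (mem_pauliSet_iff p U).1 (h₁.1 hU).1
  obtain ⟨v, rfl⟩ := (mem_pauliSet_iff p V).1 (h₂.1 hV).1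
  rw [cpow_pauliOp, circ_pauliOp] at hk hl
  obtain ⟨S, hS⟩ := hC.exists_submodule
  obtain ⟨S₁, hS₁⟩ := h₁.exists_submodule
  obtain ⟨hu, hu0⟩ := (hS₁ u).1 hU
  have hne : (k - l) • u ≠ 0 := smul_ne_zero (sub_ne_zero.2 hkl) hu0
  have hmem : (k - l) • u ∈ S := by
    have h := S.sub_mem ((hS _).1 hk).1 ((hS _).1 hl).1
    rwa [add_sub_add_right_eq_sub, ← sub_smul] at h
  exact Set.disjoint_left.1 hCd ((hS _).2 ⟨hmem, hne⟩) ((hS₁ _).2 ⟨S₁.smul_mem _ hu, hne⟩)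
end
end

section
/- Let p be an odd prime and let Σ be a complete set of p²+1 pairwise disjoint maximal commuting classes in U^{(p²)}. For any p+1 classes C₁,…,C_{p+1} ∈ Σ, there exist at most two maximal commuting classes C with C ∉ Σ and C ⊆ C₁ ∪ … ∪ C_{p+1}. -/
/-!
The operators of `PauliSet p` are labelled injectively by vectors of `V = 𝔽_p⁴` (`pauliOf`), with the
identity labelled by `0`, and two of them commute exactly when their labels are orthogonal for a
nondegenerate alternating form (`commute_pauliOf`). Maximal commuting classes thus become isotropic
planes with the origin removed (`exists_submodule_of_maxCommClass`), and the `p + 1` chosen classes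
become pairwise disjoint isotropic planes `P i`.

An isotropic plane `D` covered by the `P i` and different from all of them meets every `P i` in a line,
by counting (`inf_ne_bot_of_subset_iUnion`). Two distinct such planes are disjoint
(`inf_eq_bot_of_transversal`). Given three of them, `D`, `E`, `F`, one has `V = D ⊕ E`, and `F` is the
graph of an isomorphism `T : D → E`. Since `F` is isotropic, `(x, x') ↦ B x (T x')` is a symmetric
form on `D`; it is nondegenerate because `D` and `E` are isotropic complements. Every vector `x + T x`
of `F` lies in some `P i`, and `P i` is spanned by its intersections with `D` and `E`, so
`B x (T x) = 0`. For `p` odd this forces the symmetric form to vanish, a contradiction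
(`false_of_three_transversals`).
-/

open Matrix
open scoped Kronecker

noncomputable section

/-! ### The symplectic description of the Pauli operators -/

/-- The discrete phase space `𝔽_p⁴`: the quadruple `((m, n), (k, l))` labels the operator
`(X^m Z^n) ⊗ (X^k Z^l)`. -/
abbrev PVec (p : ℕ) := (ZMod p × ZMod p) × (ZMod p × ZMod p)

/-- The Pauli operator `(X^m Z^n) ⊗ (X^k Z^l)` labelled by `v = ((m, n), (k, l))`. -/
def pauliOf (p : ℕ) [NeZero p] (v : PVec p) : PauliMat p :=
  (genX p ^ v.1.1.val * genZ p ^ v.1.2.val) ⊗ₖ (genX p ^ v.2.1.val * genZ p ^ v.2.2.val)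

/-- The symplectic form on phase space whose vanishing is commutation of Pauli operators. -/
def pauliForm (p : ℕ) : LinearMap.BilinForm (ZMod p) (PVec p) :=
  LinearMap.mk₂ (ZMod p)
    (fun v w => v.1.2 * w.1.1 + v.2.2 * w.2.1 - (w.1.2 * v.1.1 + w.2.2 * v.2.1))
    (by intros; simp; ring) (by intros; simp; ring) (by intros; simp; ring) (by intros; simp; ring)

theorem pauliForm_apply (p : ℕ) (v w : PVec p) : pauliForm p v w =
    v.1.2 * w.1.1 + v.2.2 * w.2.1 - (w.1.2 * v.1.1 + w.2.2 * v.2.1) := rfl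

theorem pauliForm_isAlt (p : ℕ) : (pauliForm p).IsAlt := by
  intro v; rw [pauliForm_apply]; ring

theorem pauliForm_nondegenerate (p : ℕ) : (pauliForm p).Nondegenerate := by
  have hl : (pauliForm p).SeparatingLeft := by
    intro v h
    have h1 := h ((1, 0), (0, 0))
    have h2 := h ((0, 1), (0, 0))
    have h3 := h ((0, 0), (1, 0))
    have h4 := h ((0, 0), (0, 1))
    simp only [pauliForm_apply] at h1 h2 h3 h4
    ext <;> simp_all
  refine ⟨hl, fun v h => hl v fun w => ?_⟩
  rw [← (pauliForm_isAlt p).neg_eq w v, h w, neg_zero]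

theorem genX_pow_apply (p n : ℕ) [NeZero p] (i j : ZMod p) :
    (genX p ^ n) i j = if i = j + n then 1 else 0 := by
  induction n generalizing i with
  | zero => simp [Matrix.one_apply]
  | succ n ih =>
    rw [pow_succ', Matrix.mul_apply]
    have h : ∀ a, genX p i a = if i - 1 = a then 1 else 0 := fun a => by
      simp only [genX, Matrix.of_apply, sub_eq_iff_eq_add]
    simp only [ih, h, ite_mul, one_mul, zero_mul, Finset.sum_ite_eq, Finset.mem_univ, if_true]
    simp only [sub_eq_iff_eq_add, Nat.cast_succ, add_assoc]

theorem omega_pow_val (p : ℕ) [NeZero p] (a : ZMod p) : omega_p p ^ a.val = ZMod.stdAddChar a := by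
  conv_rhs => rw [← ZMod.natCast_zmod_val a, ← Int.cast_natCast, ZMod.stdAddChar_coe]
  rw [omega_p, ← Complex.exp_nat_mul]
  congr 1
  push_cast
  ring

theorem genZ_pow_apply (p : ℕ) [NeZero p] (n i j : ZMod p) :
    (genZ p ^ n.val) i j = if i = j then (ZMod.stdAddChar (n * j) : ℂ) else 0 := by
  have h : genZ p = Matrix.diagonal fun j : ZMod p => (ZMod.stdAddChar j : ℂ) := by
    ext i j
    simp only [genZ, Matrix.of_apply, Matrix.diagonal_apply, omega_pow_val]
    split_ifs with h <;> simp [h]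
  rw [h, Matrix.diagonal_pow, Matrix.diagonal_apply]
  split_ifs with hij
  · subst hij
    simp [← AddChar.map_nsmul_eq_pow]
  · rfl

theorem pauliOf_apply (p : ℕ) [NeZero p] (v : PVec p) (i j : ZMod p × ZMod p) :
    pauliOf p v i j = if i = (j.1 + v.1.1, j.2 + v.2.1) then
      (ZMod.stdAddChar (v.1.2 * j.1 + v.2.2 * j.2) : ℂ) else 0 := by
  simp only [pauliOf, Matrix.kroneckerMap_apply, Matrix.mul_apply, genX_pow_apply, genZ_pow_apply]
  simp only [ZMod.natCast_val, ZMod.cast_id', id_eq, mul_ite, mul_zero, Finset.sum_ite_eq',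
    Finset.mem_univ, if_true, ite_mul, zero_mul, one_mul, Prod.ext_iff, AddChar.map_add_eq_mul]
  split_ifs <;> simp_all

theorem pauliOf_zero (p : ℕ) [NeZero p] : pauliOf p 0 = 1 := by
  ext i j
  simp [pauliOf_apply, Matrix.one_apply]

/-- `v ↦ pauliOf p v` is a projective representation of `𝔽_p⁴`; the cocycle comes from
`Z^a X^b = ω^(a b) X^b Z^a` in each factor. -/
theorem pauliOf_mul (p : ℕ) [NeZero p] (v w : PVec p) :
    pauliOf p v * pauliOf p w =
      (ZMod.stdAddChar (v.1.2 * w.1.1 + v.2.2 * w.2.1) : ℂ) • pauliOf p (v + w) := by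
  ext i j
  simp only [Matrix.mul_apply, pauliOf_apply, Matrix.smul_apply, mul_ite, mul_zero,
    Finset.sum_ite_eq', Finset.mem_univ, if_true, ite_mul, zero_mul, Prod.fst_add,
    Prod.snd_add, smul_eq_mul]
  have h1 : j.1 + w.1.1 + v.1.1 = j.1 + (v.1.1 + w.1.1) := by ring
  have h2 : j.2 + w.2.1 + v.2.1 = j.2 + (v.2.1 + w.2.1) := by ring
  rw [h1, h2, ← AddChar.map_add_eq_mul, ← AddChar.map_add_eq_mul]
  congr 2
  ring

theorem pauliOf_ne_zero (p : ℕ) [NeZero p] (v : PVec p) : pauliOf p v ≠ 0 := by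
  intro h
  have := congrFun (congrFun h (v.1.1, v.2.1)) 0
  simp [pauliOf_apply] at this

theorem pauliOf_injective (p : ℕ) [NeZero p] : Function.Injective (pauliOf p) := by
  intro v w h
  have h' := fun i j => congrFun (congrFun h i) j
  simp only [pauliOf_apply] at h'
  have h0 := h' (v.1.1, v.2.1) 0
  simp only [Prod.fst_zero, Prod.snd_zero, zero_add, if_true, mul_zero, add_zero,
    AddChar.map_zero_eq_one] at h0
  have hx : v.1.1 = w.1.1 ∧ v.2.1 = w.2.1 := by
    by_contra hne
    rw [if_neg (by simpa using hne)] at h0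
    exact one_ne_zero h0
  have h1 := h' (1 + v.1.1, v.2.1) (1, 0)
  have h2 := h' (v.1.1, 1 + v.2.1) (0, 1)
  simp [hx.1, hx.2, ZMod.injective_stdAddChar.eq_iff] at h1 h2
  ext <;> simp [hx, h1, h2]

theorem commute_pauliOf (p : ℕ) [NeZero p] (v w : PVec p) :
    Commute (pauliOf p v) (pauliOf p w) ↔ pauliForm p v w = 0 := by
  rw [Commute, SemiconjBy, pauliOf_mul, pauliOf_mul, add_comm w v,
    (smul_left_injective ℂ (pauliOf_ne_zero p (v + w))).eq_iff,
    ZMod.injective_stdAddChar.eq_iff, pauliForm_apply, sub_eq_zero]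

/-! ### Isotropic planes in a four-dimensional symplectic space -/

section LinearAlgebra

variable {K V : Type*} [Field K] [AddCommGroup V] [Module K V]

theorem sup_eq_of_disjoint_of_finrank_eq_two [FiniteDimensional K V] {P A B : Submodule K V}
    (hP : Module.finrank K P = 2) (hA : A ≤ P) (hB : B ≤ P) (hA0 : A ≠ ⊥) (hB0 : B ≠ ⊥)
    (hAB : A ⊓ B = ⊥) : A ⊔ B = P := by
  apply Submodule.eq_of_le_of_finrank_le (sup_le hA hB)
  have h := Submodule.finrank_sup_add_finrank_inf_eq A B
  rw [hAB, finrank_bot] at h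
  have := Submodule.one_le_finrank_iff.mpr hA0
  have := Submodule.one_le_finrank_iff.mpr hB0
  omega

theorem sup_eq_top_of_inf_eq_bot [FiniteDimensional K V] (hV : Module.finrank K V = 4)
    {P Q : Submodule K V} (hP : Module.finrank K P = 2) (hQ : Module.finrank K Q = 2)
    (h : P ⊓ Q = ⊥) : P ⊔ Q = ⊤ := by
  apply Submodule.eq_top_of_finrank_eq
  have h' := Submodule.finrank_sup_add_finrank_inf_eq P Q
  rw [h, finrank_bot] at h'
  omega

theorem finrank_le_one_of_lt {P A : Submodule K V} [FiniteDimensional K V]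
    (hP : Module.finrank K P = 2) (h : A < P) : Module.finrank K A ≤ 1 := by
  have := Submodule.finrank_lt_finrank_of_lt h
  omega

/-- `B` vanishes identically on `L`. -/
def IsIsotropic (B : LinearMap.BilinForm K V) (L : Submodule K V) : Prop :=
  ∀ u ∈ L, ∀ v ∈ L, B u v = 0

theorem IsIsotropic.finrank_le_two [FiniteDimensional K V] {B : LinearMap.BilinForm K V}
    (hB : B.Nondegenerate) (hV : Module.finrank K V = 4) {L : Submodule K V}
    (hL : IsIsotropic B L) : Module.finrank K L ≤ 2 := by
  have h := LinearMap.BilinForm.finrank_orthogonal hB L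
  have hle : L ≤ B.orthogonal L := fun v hv u hu => hL u hu v hv
  have := Submodule.finrank_mono hle
  omega

/-- A set of `q² - 1` nonzero, pairwise orthogonal vectors is an isotropic plane without its origin:
its span is isotropic, hence of dimension at most 2, so there is no room for further vectors. -/
theorem exists_submodule_of_ncard [Finite K] [FiniteDimensional K V]
    {B : LinearMap.BilinForm K V} (hB : B.Nondegenerate) (hV : Module.finrank K V = 4)
    (s : Set V) (h0 : (0 : V) ∉ s) (hcard : s.ncard = Nat.card K ^ 2 - 1)
    (hcomm : ∀ u ∈ s, ∀ v ∈ s, B u v = 0) :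
    ∃ L : Submodule K V, Module.finrank K L = 2 ∧ IsIsotropic B L ∧
      s = (L : Set V) \ {0} := by
  have : Finite V := Module.finite_of_finite K
  set L := Submodule.span K s with hLdef
  have hiso : IsIsotropic B L := by
    intro u hu v hv
    induction hu using Submodule.span_induction with
    | mem u hu =>
      induction hv using Submodule.span_induction with
      | mem v hv => exact hcomm u hu v hv
      | zero => simp
      | add x y _ _ hx hy => simp [hx, hy]
      | smul a x _ hx => simp [hx]
    | zero => simp
    | add x y _ _ hx hy => simp [hx, hy]
    | smul a x _ hx => simp [hx]
  have hle := hiso.finrank_le_two hB hV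
  have hsub : s ⊆ (L : Set V) \ {0} := fun v hv =>
    ⟨Submodule.subset_span hv, fun h => h0 (by rwa [Set.mem_singleton_iff.mp h] at hv)⟩
  have hLcard : ((L : Set V) \ {0}).ncard = Nat.card K ^ Module.finrank K L - 1 := by
    rw [Set.ncard_sdiff_singleton_of_mem (zero_mem L), ← Module.natCard_eq_pow_finrank]
    rfl
  have hq : 2 ≤ Nat.card K := Finite.one_lt_card
  have h2 : Module.finrank K L = 2 := by
    by_contra hne
    have h1 : Module.finrank K L ≤ 1 := by omega
    have := Set.ncard_le_ncard hsub (Set.toFinite _)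
    rw [hLcard, hcard] at this
    have h3 : Nat.card K ^ Module.finrank K L ≤ Nat.card K ^ 1 :=
      Nat.pow_le_pow_right (by omega) h1
    have h4 : Nat.card K ^ 1 < Nat.card K ^ 2 := Nat.pow_lt_pow_right (by omega) (by omega)
    have h5 : 1 ≤ Nat.card K ^ Module.finrank K L := Nat.one_le_pow _ _ (by omega)
    omega
  refine ⟨L, h2, hiso, Set.eq_of_subset_of_ncard_le hsub ?_ (Set.toFinite _)⟩
  rw [hLcard, hcard, h2]

/-- A plane covered by `q + 1` planes other than itself meets each of them nontrivially: each of them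
contains at most `q - 1` of its `q² - 1 = (q + 1)(q - 1)` nonzero vectors. -/
theorem inf_ne_bot_of_subset_iUnion [Finite K] [FiniteDimensional K V]
    {n : ℕ} (hn : n = Nat.card K + 1) {P : Fin n → Submodule K V}
    (hP : ∀ i, Module.finrank K (P i) = 2) {D : Submodule K V} (hD : Module.finrank K D = 2) (hne : ∀ i, D ≠ P i)
    (hsub : (D : Set V) ⊆ ⋃ i, (P i : Set V)) (i : Fin n) :
    D ⊓ P i ≠ ⊥ := by
  classical
  intro hbot
  have : Finite V := Module.finite_of_finite K
  have hq : 2 ≤ Nat.card K := Finite.one_lt_card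
  have hcov : (D : Set V) \ {0} ⊆
      ⋃ j ∈ Finset.univ.erase i, (((D ⊓ P j : Submodule K V) : Set V) \ {0}) := by
    rintro v ⟨hv, hv0⟩
    obtain ⟨j, hj⟩ := Set.mem_iUnion.mp (hsub hv)
    have hji : j ≠ i := by
      rintro rfl
      have hm : v ∈ D ⊓ P j := ⟨hv, hj⟩
      rw [hbot] at hm
      exact hv0 hm
    simp only [Set.mem_iUnion]
    exact ⟨j, by simpa using hji, ⟨hv, hj⟩, hv0⟩
  have hcard (A : Submodule K V) :
      ((A : Set V) \ {0}).ncard = Nat.card K ^ Module.finrank K A - 1 := by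
    rw [Set.ncard_sdiff_singleton_of_mem (zero_mem A), ← Module.natCard_eq_pow_finrank]
    rfl
  have h1 := (Set.ncard_le_ncard hcov (Set.toFinite _)).trans
    (Finset.set_ncard_biUnion_le _ _)
  have h2 : ∑ j ∈ Finset.univ.erase i, (((D ⊓ P j : Submodule K V) : Set V) \ {0}).ncard ≤
      (Finset.univ.erase i).card • (Nat.card K - 1) := by
    refine Finset.sum_le_card_nsmul _ _ _ fun j _ => ?_
    have hlt : D ⊓ P j < D := lt_of_le_of_ne inf_le_left fun h =>
      hne j (Submodule.eq_of_le_of_finrank_le (inf_eq_left.mp h) (by rw [hD, hP]))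
    rw [hcard]
    have h := Nat.pow_le_pow_right (n := Nat.card K) (by omega) (finrank_le_one_of_lt hD hlt)
    rw [pow_one] at h
    exact Nat.sub_le_sub_right h 1
  rw [hcard, hD] at h1
  rw [Finset.card_erase_of_mem (Finset.mem_univ i), Finset.card_univ, Fintype.card_fin,
    smul_eq_mul] at h2
  have h3 : Nat.card K ^ 2 - 1 = (Nat.card K + 1) * (Nat.card K - 1) := Nat.sq_sub_sq _ 1
  have h4 := h1.trans h2
  rw [h3] at h4
  -- The common factor `Nat.card K - 1` is positive, leaving `Nat.card K + 1 ≤ n - 1`.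
  exact absurd (Nat.le_of_mul_le_mul_right h4 (by omega)) (by omega)

/-- Two distinct isotropic transversals of a partial spread of at least three planes are disjoint.
If they shared a vector `e ∈ P i₀`, every other `P i` would be spanned by a vector of `D` and a vector
of `E`, hence would be orthogonal to `e`; two such planes span `V`, contradicting nondegeneracy. -/
theorem inf_eq_bot_of_transversal [FiniteDimensional K V] {B : LinearMap.BilinForm K V}
    (hB : B.Nondegenerate) (hV : Module.finrank K V = 4) {n : ℕ} (hn : 3 ≤ n)
    {P : Fin n → Submodule K V}
    (hP : ∀ i, Module.finrank K (P i) = 2)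
    (hdisj : ∀ i j, i ≠ j → P i ⊓ P j = ⊥) {D E : Submodule K V}
    (hD : Module.finrank K D = 2) (hE : Module.finrank K E = 2)
    (hDi : IsIsotropic B D) (hEi : IsIsotropic B E) (hDE : D ≠ E)
    (hDP : ∀ i, D ⊓ P i ≠ ⊥) (hEP : ∀ i, E ⊓ P i ≠ ⊥)
    (hsub : (D : Set V) ⊆ ⋃ i, (P i : Set V)) : D ⊓ E = ⊥ := by
  by_contra hne
  obtain ⟨e, he, he0⟩ := (Submodule.ne_bot_iff _).mp hne
  obtain ⟨i₀, hi₀⟩ := Set.mem_iUnion.mp (hsub he.1)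
  have hlt : D ⊓ E < D := lt_of_le_of_ne inf_le_left fun h =>
    hDE (Submodule.eq_of_le_of_finrank_le (inf_eq_left.mp h) (by rw [hD, hE]))
  have hspan : D ⊓ E ≤ P i₀ := by
    have h : Submodule.span K {e} = D ⊓ E := by
      apply Submodule.eq_of_le_of_finrank_le
      · simpa using he
      · rw [finrank_span_singleton he0]
        exact finrank_le_one_of_lt hD hlt
    rw [← h]
    simpa using hi₀
  have hperp : ∀ i, i ≠ i₀ → ∀ v ∈ P i, B e v = 0 := by
    intro i hi v hv
    have h : (D ⊓ P i) ⊔ (E ⊓ P i) = P i := by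
      apply sup_eq_of_disjoint_of_finrank_eq_two (hP i) inf_le_right inf_le_right (hDP i) (hEP i)
      rw [eq_bot_iff, ← hdisj i i₀ hi]
      exact fun x hx => ⟨hx.1.2, hspan ⟨hx.1.1, hx.2.1⟩⟩
    rw [← h] at hv
    obtain ⟨a, ha, b, hb, rfl⟩ := Submodule.mem_sup.mp hv
    rw [map_add, hDi e he.1 a ha.1, hEi e he.2 b hb.1, add_zero]
  obtain ⟨i, hi, j, hj, hij⟩ : ∃ i, i ≠ i₀ ∧ ∃ j, j ≠ i₀ ∧ i ≠ j := by
    have h : 2 ≤ (Finset.univ.erase i₀).card := by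
      rw [Finset.card_erase_of_mem (Finset.mem_univ i₀), Finset.card_univ, Fintype.card_fin]
      omega
    obtain ⟨i, hi, j, hj, hij⟩ := Finset.one_lt_card.mp h
    exact ⟨i, Finset.ne_of_mem_erase hi, j, Finset.ne_of_mem_erase hj, hij⟩
  refine he0 (hB.1 e fun v => ?_)
  have hv : v ∈ P i ⊔ P j := by
    rw [sup_eq_top_of_inf_eq_bot hV (hP i) (hP j) (hdisj i j hij)]
    trivial
  obtain ⟨a, ha, b, hb, rfl⟩ := Submodule.mem_sup.mp hv
  rw [map_add, hperp i hi a ha, hperp j hj b hb, add_zero]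

/-- Three pairwise disjoint isotropic planes cannot all be transversal to isotropic planes that cover
one of them. Writing the vectors of `F` as `x + y` with `x ∈ D`, `y ∈ E`, the quadratic form
`x + y ↦ B x y` on `F` vanishes because `x` and `y` lie in a common `P i`. Its polarization is
`2 * B x y'` since `F` is isotropic, so `D` is orthogonal to every `y'`, and `F = D`. -/
theorem false_of_three_transversals [FiniteDimensional K V] (hK : (2 : K) ≠ 0)
    {B : LinearMap.BilinForm K V} (hB : B.Nondegenerate) (halt : B.IsAlt)
    (hV : Module.finrank K V = 4) {ι : Type*}
    {P : ι → Submodule K V} (hP : ∀ i, Module.finrank K (P i) = 2)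
    (hPi : ∀ i, IsIsotropic B (P i)) {D E F : Submodule K V}
    (hD : Module.finrank K D = 2) (hE : Module.finrank K E = 2) (hF : Module.finrank K F = 2)
    (hDi : IsIsotropic B D) (hEi : IsIsotropic B E) (hFi : IsIsotropic B F)
    (hDP : ∀ i, D ⊓ P i ≠ ⊥) (hEP : ∀ i, E ⊓ P i ≠ ⊥)
    (hDE : D ⊓ E = ⊥) (hDF : D ⊓ F = ⊥) (hEF : E ⊓ F = ⊥)
    (hsub : (F : Set V) ⊆ ⋃ i, (P i : Set V)) : False := by
  have hdec : ∀ d ∈ F, ∃ x ∈ D, ∃ y ∈ E, x + y = d ∧ B x y = 0 := by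
    intro d hd
    obtain ⟨i, hi⟩ := Set.mem_iUnion.mp (hsub hd)
    have h : (D ⊓ P i) ⊔ (E ⊓ P i) = P i := by
      apply sup_eq_of_disjoint_of_finrank_eq_two (hP i) inf_le_right inf_le_right (hDP i) (hEP i)
      rw [eq_bot_iff, ← hDE]
      exact fun x hx => ⟨hx.1.1, hx.2.1⟩
    rw [← h] at hi
    obtain ⟨x, hx, y, hy, hxy⟩ := Submodule.mem_sup.mp hi
    exact ⟨x, hx.1, y, hy.1, hxy, hPi i x hx.2 y hy.2⟩
  have hzero : ∀ x ∈ D, ∀ y ∈ E, x + y ∈ F → B x y = 0 := by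
    intro x hx y hy hxy
    obtain ⟨x', hx', y', hy', h, h0⟩ := hdec _ hxy
    have hdiff : x - x' = y' - y := by
      rw [sub_eq_sub_iff_add_eq_add, ← h, add_comm]
    have hm : x - x' ∈ D ⊓ E := ⟨sub_mem hx hx', hdiff ▸ sub_mem hy' hy⟩
    rw [hDE, Submodule.mem_bot] at hm
    rw [sub_eq_zero.mp hm, ← sub_eq_zero.mp (hdiff.symm.trans hm)]
    exact h0
  have hpolar : ∀ x ∈ D, ∀ y ∈ E, x + y ∈ F → ∀ x' ∈ D, ∀ y' ∈ E, x' + y' ∈ F →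
      B x y' = 0 := by
    intro x hx y hy hxy x' hx' y' hy' hxy'
    have h1 := hzero (x + x') (add_mem hx hx') (y + y') (add_mem hy hy')
      (by rw [add_add_add_comm]; exact add_mem hxy hxy')
    have h2 := hFi _ hxy _ hxy'
    simp only [map_add, LinearMap.add_apply, hzero x hx y hy hxy, hzero x' hx' y' hy' hxy',
      hDi x hx x' hx', hEi y hy y' hy'] at h1 h2
    rw [← halt.neg_eq x' y] at h2
    have h3 : 2 * B x y' = 0 := by linear_combination h1 + h2
    exact (mul_eq_zero.mp h3).resolve_left hK
  have hF0 : F ≠ ⊥ := by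
    rintro rfl
    simp at hF
  obtain ⟨d, hd, hd0⟩ := (Submodule.ne_bot_iff _).mp hF0
  obtain ⟨x', hx', y', hy', rfl, -⟩ := hdec d hd
  -- As `E ⊔ F = ⊤`, the projection of `F` to `D` along `E` is onto, so `y'` is orthogonal to `D ⊔ E`.
  have hy0 : y' = 0 := by
    refine hB.2 y' fun v => ?_
    have hv : v ∈ D ⊔ E := by
      rw [sup_eq_top_of_inf_eq_bot hV hD hE hDE]; trivial
    obtain ⟨a, ha, b, hb, rfl⟩ := Submodule.mem_sup.mp hv
    have hm : a ∈ E ⊔ F := by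
      rw [sup_eq_top_of_inf_eq_bot hV hE hF hEF]; trivial
    obtain ⟨c, hc, f, hf, hcf⟩ := Submodule.mem_sup.mp hm
    have haf : a + -c ∈ F := by
      rw [← hcf, add_comm c f, add_neg_cancel_right]; exact hf
    rw [map_add, LinearMap.add_apply, hEi b hb y' hy',
      hpolar a ha (-c) (neg_mem hc) haf x' hx' y' hy' hd, add_zero]
  rw [hy0, add_zero] at hd hd0
  have hm : x' ∈ D ⊓ F := ⟨hx', hd⟩
  rw [hDF] at hm
  exact hd0 hm

theorem eq_of_three_transversals [Finite K] [FiniteDimensional K V] (hK : (2 : K) ≠ 0)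
    {B : LinearMap.BilinForm K V} (hB : B.Nondegenerate) (halt : B.IsAlt)
    (hV : Module.finrank K V = 4)
    {n : ℕ} (hn : n = Nat.card K + 1) {P : Fin n → Submodule K V}
    (hP : ∀ i, Module.finrank K (P i) = 2)
    (hPi : ∀ i, IsIsotropic B (P i)) (hdisj : ∀ i j, i ≠ j → P i ⊓ P j = ⊥)
    (D : Fin 3 → Submodule K V) (hD : ∀ k, Module.finrank K (D k) = 2)
    (hDi : ∀ k, IsIsotropic B (D k)) (hne : ∀ k i, D k ≠ P i)
    (hsub : ∀ k, (D k : Set V) ⊆ ⋃ i, (P i : Set V)) :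
    ∃ k l, k < l ∧ D k = D l := by
  by_contra! hdist
  have hq : 2 ≤ Nat.card K := Finite.one_lt_card
  have hmeet k := inf_ne_bot_of_subset_iUnion hn hP (hD k) (hne k) (hsub k)
  have hbot k l (hkl : k < l) : D k ⊓ D l = ⊥ :=
    inf_eq_bot_of_transversal hB hV (by omega) hP hdisj (hD k) (hD l) (hDi k) (hDi l)
      (hdist k l hkl) (hmeet k) (hmeet l) (hsub k)
  exact false_of_three_transversals hK hB halt hV hP hPi (hD 0) (hD 1) (hD 2) (hDi 0) (hDi 1)
    (hDi 2) (hmeet 0) (hmeet 1) (hbot 0 1 (by decide)) (hbot 0 2 (by decide))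
    (hbot 1 2 (by decide)) (hsub 2)

end LinearAlgebra

/-! ### Maximal commuting classes as isotropic planes -/

/-- Maximal commuting classes are the isotropic planes of phase space with the origin removed. -/
theorem exists_submodule_of_maxCommClass (p : ℕ) [NeZero p] [Fact p.Prime] {C : Set (PauliMat p)}
    (hC : MaxCommClass p C) : ∃ L : Submodule (ZMod p) (PVec p),
      Module.finrank (ZMod p) L = 2 ∧ IsIsotropic (pauliForm p) L ∧
      C = pauliOf p '' ((L : Set (PVec p)) \ {0}) := by
  obtain ⟨hsub, hcard, hcomm⟩ := hC
  have himg : pauliOf p '' (pauliOf p ⁻¹' C) = C := by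
    rw [Set.image_preimage_eq_iff]
    intro U hU
    obtain ⟨m, n, k, l, rfl⟩ := (hsub hU).1
    exact ⟨((m, n), (k, l)), rfl⟩
  obtain ⟨L, h2, hiso, hs⟩ := exists_submodule_of_ncard (pauliForm_nondegenerate p)
    (by simp) (pauliOf p ⁻¹' C)
    (fun h => (hsub h).2 (pauliOf_zero p))
    (by rw [← Set.ncard_image_of_injective _ (pauliOf_injective p), himg, hcard, Nat.card_zmod])
    (fun u hu v hv => (commute_pauliOf p u v).mp (hcomm _ hu _ hv))
  exact ⟨L, h2, hiso, by rw [← hs, himg]⟩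

/-- For an odd prime p and a complete set Σ, given any p+1 distinct
classes of Σ, there are at most two maximal commuting classes not in Σ that are
contained in their union. -/
theorem stmt6 (p : ℕ) [NeZero p] (hp : p.Prime) (hodd : Odd p)
    (S : Set (Set (PauliMat p))) (hS : CompleteSet p S)
    (C : Fin (p + 1) → Set (PauliMat p))
    (hmem : ∀ i, C i ∈ S) (hinj : Function.Injective C) :
    ∀ D₁ D₂ D₃ : Set (PauliMat p),
      (MaxCommClass p D₁ ∧ D₁ ∉ S ∧ D₁ ⊆ ⋃ i, C i) →
      (MaxCommClass p D₂ ∧ D₂ ∉ S ∧ D₂ ⊆ ⋃ i, C i) →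
      (MaxCommClass p D₃ ∧ D₃ ∉ S ∧ D₃ ⊆ ⋃ i, C i) →
      D₁ = D₂ ∨ D₁ = D₃ ∨ D₂ = D₃ := by
  have : Fact p.Prime := ⟨hp⟩
  intro D₁ D₂ D₃ h₁ h₂ h₃
  let D : Fin 3 → Set (PauliMat p) := ![D₁, D₂, D₃]
  have hD : ∀ k, MaxCommClass p (D k) ∧ D k ∉ S ∧ D k ⊆ ⋃ i, C i := by
    intro k
    fin_cases k
    exacts [h₁, h₂, h₃]
  choose L hL2 hLi hLD using fun k => exists_submodule_of_maxCommClass p (hD k).1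
  choose P hP2 hPi hPC using fun i => exists_submodule_of_maxCommClass p (hS.2.1 _ (hmem i))
  have hdisj : ∀ i j, i ≠ j → P i ⊓ P j = ⊥ := by
    intro i j hij
    have h := hS.2.2 (hmem i) (hmem j) (hinj.ne hij)
    rw [hPC, hPC] at h
    refine (Submodule.eq_bot_iff _).mpr fun v hv => ?_
    by_contra hv0
    exact Set.disjoint_left.mp h ⟨v, ⟨hv.1, hv0⟩, rfl⟩ ⟨v, ⟨hv.2, hv0⟩, rfl⟩
  have hne : ∀ k i, L k ≠ P i := by
    intro k i h
    apply (hD k).2.1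
    rw [hLD, h, ← hPC]
    exact hmem i
  have hsub : ∀ k, (L k : Set (PVec p)) ⊆ ⋃ i, (P i : Set (PVec p)) := by
    intro k v hv
    by_cases hv0 : v = 0
    · exact Set.mem_iUnion.mpr ⟨0, hv0 ▸ zero_mem (P 0)⟩
    · have h : pauliOf p v ∈ D k := by
        rw [hLD]
        exact ⟨v, ⟨hv, hv0⟩, rfl⟩
      obtain ⟨i, hi⟩ := Set.mem_iUnion.mp ((hD k).2.2 h)
      rw [hPC] at hi
      obtain ⟨w, hw, hwv⟩ := hi
      exact Set.mem_iUnion.mpr ⟨i, pauliOf_injective p hwv ▸ hw.1⟩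
  have htwo : (2 : ZMod p) ≠ 0 :=
    Ring.two_ne_zero (by rw [ZMod.ringChar_zmod_n]; rintro rfl; exact absurd hodd (by decide))
  obtain ⟨k, l, hkl, heq⟩ := eq_of_three_transversals htwo (pauliForm_nondegenerate p)
    (pauliForm_isAlt p) (by simp) (by rw [Nat.card_zmod]) hP2 hPi hdisj L hL2 hLi hne hsub
  have hDkl : D k = D l := by rw [hLD, hLD, heq]
  fin_cases k <;> fin_cases l <;> first
    | exact absurd hkl (by decide)
    | exact Or.inl hDkl
    | exact Or.inr (Or.inl hDkl)
    | exact Or.inr (Or.inr hDkl)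
end
end
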